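/- arXiv:2410.02418 — 5 statements merged into one kernel-verified Lean document; each statement's English description precedes it below -/
import Mathlib

section
/- Let β = i − 1 and D = {0, 1, −1, i, −i}. Let Q = {0, ±1, ±i, ±1±i, ±2, ±2i, ±1±2i, ±2±i} ⊂ ℤ[i] (21 elements). If w ∈ Q + D and w ∉ βQ, then for every pair b, c ∈ D there exists a unique pair (d, q') with d ∈ D \ {0} and q' ∈ Q such that w + bβ + cβ² = d + β³q'. -/
/-!
In coordinates every set involved is cut out by linear inequalities: `D` is `|re| + |im| ≤ 1`
(`mem_gD_iff`), and `Q` is `|re| ≤ 2`, `|im| ≤ 2`, `|re| + |im| ≤ 3` (`mem_Qset_iff`).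

Multiplication by `β` identifies `Q` with the elements of even `re + im` satisfying `|re| ≤ 3`,
`|im| ≤ 3`, `|re| + |im| ≤ 4`, and every element of `Q + D` satisfies these bounds. So `w ∉ βQ`
forces `w` to be odd, i.e. prime to `β`, and then `|re w| + |im w| ≤ 3`
(`odd_of_not_mem`).

The element `x = w + bβ + cβ²` is then odd as well. The units of `ℤ[i] / β³` are represented
exactly once by `1, -1, i, -i`, so exactly one nonzero digit `d` satisfies `β³ ∣ x - d`; this gives
uniqueness (`digit_unique`). Since `|re x|, |im x| ≤ 6` and `|re x| + |im x| ≤ 7`, the quotient `(x - d) / β³`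
falls in `Q` (`exists_digit`).
-/

open Matrix

noncomputable section

/-- The imaginary unit `i` in the Gaussian integers. -/
def gI : GaussianInt := ⟨0, 1⟩

/-- The base `β = i - 1`. -/
def gβ : GaussianInt := ⟨-1, 1⟩

/-- The digit set `D = {0, 1, -1, i, -i}`. -/
def gD : Set GaussianInt := {0, 1, -1, gI, -gI}

/-- Value of a digit string `d_{n-1} ⋯ d_0`, given as a list with the least
significant digit first: `gval [d_0, d_1, …, d_{n-1}] = Σ d_j β^j`. -/
def gval (l : List GaussianInt) : GaussianInt :=
  l.foldr (fun d acc => d + gβ * acc) 0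

/-- `l` (least significant digit first) is a `(β, D)`-representation of `x`. -/
def gIsRep (x : GaussianInt) (l : List GaussianInt) : Prop :=
  (∀ d ∈ l, d ∈ gD) ∧ gval l = x

/-- A representation is normalized if it is empty or its leading digit
(the last entry of the LSD-first list) is nonzero. -/
def gNormalized (l : List GaussianInt) : Prop := l.getLast? ≠ some 0

/-- Number of nonzero digits (Hamming weight). -/
def gweight (l : List GaussianInt) : ℕ := (l.filter (fun d => d ≠ 0)).length

/-- The set `Q` of 21 states. -/
def Qset : Set GaussianInt :=
  {0, 1, -1, gI, -gI, 1 + gI, 1 - gI, -1 + gI, -1 - gI,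
   2, -2, 2 * gI, -2 * gI, 1 + 2 * gI, 1 - 2 * gI, -1 + 2 * gI, -1 - 2 * gI,
   2 + gI, 2 - gI, -2 + gI, -2 - gI}

/-- The `ℓ¹` ball as an intersection of half-planes, the form in which `omega` can use it. -/
theorem abs_add_abs_le_iff (x y n : ℤ) :
    |x| + |y| ≤ n ↔ x + y ≤ n ∧ x - y ≤ n ∧ y - x ≤ n ∧ -x - y ≤ n := by
  rcases abs_cases x with hx | hx <;> rcases abs_cases y with hy | hy <;> omega

theorem mem_gD_iff (z : GaussianInt) : z ∈ gD ↔ |z.re| + |z.im| ≤ 1 := by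
  obtain ⟨x, y⟩ := z
  simp only [gD, gI, Set.mem_insert_iff, Set.mem_singleton_iff, Zsqrtd.ext_iff, Zsqrtd.re_zero,
    Zsqrtd.im_zero, Zsqrtd.re_one, Zsqrtd.im_one, Zsqrtd.re_neg, Zsqrtd.im_neg,
    abs_add_abs_le_iff]
  omega

theorem mem_Qset_iff (z : GaussianInt) :
    z ∈ Qset ↔ |z.re| ≤ 2 ∧ |z.im| ≤ 2 ∧ |z.re| + |z.im| ≤ 3 := by
  obtain ⟨x, y⟩ := z
  simp only [Qset, gI, Set.mem_insert_iff, Set.mem_singleton_iff, Zsqrtd.ext_iff, Zsqrtd.re_zero,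
    Zsqrtd.im_zero, Zsqrtd.re_one, Zsqrtd.im_one, Zsqrtd.re_neg, Zsqrtd.im_neg, Zsqrtd.re_add,
    Zsqrtd.im_add, Zsqrtd.re_sub, Zsqrtd.im_sub, Zsqrtd.re_mul, Zsqrtd.im_mul,
    Zsqrtd.re_ofNat, Zsqrtd.im_ofNat, abs_add_abs_le_iff, abs_le]
  constructor
  · omega
  · rintro ⟨hx, hy, h⟩
    obtain ⟨hx1, hx2⟩ := hx
    obtain ⟨hy1, hy2⟩ := hy
    interval_cases x <;> interval_cases y <;> simp at h ⊢

/-- An element of `Q + D` outside `βQ` is odd: the quotient by `β` of an even one lies in `Q`. -/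
theorem odd_of_not_mem (w : GaussianInt) (hw : ∃ q ∈ Qset, ∃ a ∈ gD, w = q + a)
    (hw' : ¬ ∃ q ∈ Qset, w = gβ * q) :
    (w.re + w.im) % 2 = 1 ∧ |w.re| + |w.im| ≤ 3 := by
  obtain ⟨q, hq, a, ha, rfl⟩ := hw
  simp only [mem_Qset_iff, abs_le, abs_add_abs_le_iff] at hq
  rw [mem_gD_iff, abs_add_abs_le_iff] at ha
  have hodd : ((q + a).re + (q + a).im) % 2 = 1 := by
    by_contra h
    -- `(u + v i) / β = ((v - u) - (u + v) i) / 2`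
    refine hw' ⟨⟨((q + a).im - (q + a).re) / 2, -(((q + a).re + (q + a).im) / 2)⟩, ?_, ?_⟩
    · simp only [mem_Qset_iff, abs_le, abs_add_abs_le_iff, Zsqrtd.re_add, Zsqrtd.im_add] at h ⊢
      omega
    · simp only [gβ, Zsqrtd.ext_iff, Zsqrtd.re_mul, Zsqrtd.im_mul, Zsqrtd.re_add,
        Zsqrtd.im_add] at h ⊢
      omega
  refine ⟨hodd, ?_⟩
  simp only [abs_add_abs_le_iff, Zsqrtd.re_add, Zsqrtd.im_add] at hodd ⊢
  omega

theorem gβ_sq : gβ ^ 2 = ⟨0, -2⟩ := by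
  simp [gβ, pow_two, Zsqrtd.ext_iff]

theorem gβ_cube : gβ ^ 3 = ⟨2, 2⟩ := by
  simp [gβ, pow_succ, Zsqrtd.ext_iff]

theorem eq_digit_add_iff (x d q : GaussianInt) :
    x = d + gβ ^ 3 * q ↔
      x.re = d.re + 2 * q.re - 2 * q.im ∧ x.im = d.im + 2 * q.re + 2 * q.im := by
  simp only [gβ_cube, Zsqrtd.ext_iff, Zsqrtd.re_add, Zsqrtd.im_add, Zsqrtd.re_mul, Zsqrtd.im_mul]
  constructor <;> rintro ⟨h1, h2⟩ <;> constructor <;> linarith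

/-- A small odd `x` is congruent modulo `β³ = 2 + 2i` to a nonzero digit, with quotient in `Q`. -/
theorem exists_digit (x : GaussianInt) (hodd : (x.re + x.im) % 2 = 1) (hre : |x.re| ≤ 6)
    (him : |x.im| ≤ 6) (hsum : |x.re| + |x.im| ≤ 7) :
    ∃ d q : GaussianInt, d ∈ gD ∧ d ≠ 0 ∧ q ∈ Qset ∧ x = d + gβ ^ 3 * q := by
  rw [abs_add_abs_le_iff] at hsum
  rw [abs_le] at hre him
  -- `(u + v i) / β³ = ((u + v) + (v - u) i) / 4`
  have key : ∀ d : GaussianInt, d ∈ gD → d ≠ 0 → (x.re - d.re) % 2 = 0 →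
      (x.re - d.re + (x.im - d.im)) % 4 = 0 →
      ∃ d q : GaussianInt, d ∈ gD ∧ d ≠ 0 ∧ q ∈ Qset ∧ x = d + gβ ^ 3 * q := by
    intro d hd h0 h2 h4
    refine ⟨d, ⟨(x.re - d.re + (x.im - d.im)) / 4, (x.im - d.im - (x.re - d.re)) / 4⟩,
      hd, h0, ?_, ?_⟩
    · rw [mem_gD_iff, abs_add_abs_le_iff] at hd
      simp only [mem_Qset_iff, abs_le, abs_add_abs_le_iff]
      omega
    · rw [eq_digit_add_iff]
      dsimp only
      omega
  -- The parity of `re x` separates `±1` from `±i`, and `re x + im x` modulo `4` gives the sign.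
  rcases Int.emod_two_eq_zero_or_one x.re with h | h <;>
    rcases (by omega : (x.re + x.im) % 4 = 1 ∨ (x.re + x.im) % 4 = 3) with h' | h'
  · exact key ⟨0, 1⟩ (by simp [mem_gD_iff]) (by simp [Zsqrtd.ext_iff])
      (by dsimp only; omega) (by dsimp only; omega)
  · exact key ⟨0, -1⟩ (by simp [mem_gD_iff]) (by simp [Zsqrtd.ext_iff])
      (by dsimp only; omega) (by dsimp only; omega)
  · exact key ⟨1, 0⟩ (by simp [mem_gD_iff]) (by simp [Zsqrtd.ext_iff])
      (by dsimp only; omega) (by dsimp only; omega)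
  · exact key ⟨-1, 0⟩ (by simp [mem_gD_iff]) (by simp [Zsqrtd.ext_iff])
      (by dsimp only; omega) (by dsimp only; omega)

/-- Distinct digits are incongruent modulo `β³`. -/
theorem digit_unique (x d q d' q' : GaussianInt) (hd : d ∈ gD) (hd' : d' ∈ gD)
    (h : x = d + gβ ^ 3 * q) (h' : x = d' + gβ ^ 3 * q') : d' = d ∧ q' = q := by
  rw [mem_gD_iff, abs_add_abs_le_iff] at hd hd'
  rw [eq_digit_add_iff] at h h'
  simp only [Zsqrtd.ext_iff]
  omega

/-- If `w ∈ Q + D` and `w ∉ βQ`, then for every pair `b, c ∈ D` there is a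
unique pair `(d, q')` with `d ∈ D \ {0}` and `q' ∈ Q` such that
`w + bβ + cβ² = d + β³ q'`. -/
theorem stmt0 (w : GaussianInt)
    (hw : ∃ q ∈ Qset, ∃ a ∈ gD, w = q + a)
    (hw' : ¬ ∃ q ∈ Qset, w = gβ * q)
    (b c : GaussianInt) (hb : b ∈ gD) (hc : c ∈ gD) :
    ∃! p : GaussianInt × GaussianInt,
      (p.1 ∈ gD ∧ p.1 ≠ 0 ∧ p.2 ∈ Qset) ∧
        w + b * gβ + c * gβ ^ 2 = p.1 + gβ ^ 3 * p.2 := by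
  obtain ⟨hodd, hsum⟩ := odd_of_not_mem w hw hw'
  rw [abs_add_abs_le_iff] at hsum
  rw [mem_gD_iff, abs_add_abs_le_iff] at hb hc
  have hre : (w + b * gβ + c * gβ ^ 2).re = w.re - b.re - b.im + 2 * c.im := by
    rw [gβ_sq]
    simp only [gβ, Zsqrtd.re_add, Zsqrtd.re_mul]
    ring
  have him : (w + b * gβ + c * gβ ^ 2).im = w.im + b.re - b.im - 2 * c.re := by
    rw [gβ_sq]
    simp only [gβ, Zsqrtd.im_add, Zsqrtd.im_mul]
    ring
  obtain ⟨d, q, hd, h0, hq, h⟩ := exists_digit (w + b * gβ + c * gβ ^ 2)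
    (by omega) (by rw [abs_le]; omega) (by rw [abs_le]; omega)
    (by rw [abs_add_abs_le_iff]; omega)
  refine ⟨(d, q), ⟨⟨hd, h0, hq⟩, h⟩, ?_⟩
  rintro ⟨d', q'⟩ ⟨⟨hd', -, -⟩, h'⟩
  obtain ⟨h1, h2⟩ := digit_unique _ d q d' q' hd hd' h h'
  exact Prod.ext h1 h2
end
end

section
/- Every Gaussian integer x ∈ ℤ[i] has a 3-NAF (β, D)-representation in base β = i − 1 with digit set D = {0, 1, −1, i, −i}; that is, there exist n ∈ ℕ and digits d_0, …, d_{n−1} ∈ D with x = Σ_{j=0}^{n−1} d_j β^j such that among any three consecutive digits d_{j+2}, d_{j+1}, d_j at most one is nonzero. -/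
/-!
Since `β ^ 3 = 2 + 2 * i`, the units `1, -1, i, -i` represent exactly the four classes modulo `β ^ 3`
that are prime to `β`. So every `x` not divisible by `β` is `u + β ^ 3 * y` with a nonzero digit
`u`, and every other `x` is `β * y`. For `x ≠ 0` the quotient `y` has smaller norm than `x`:
`N y = N x / 2` in the divisible case, and `N y = N (x - u) / 8 < N x` otherwise. Induction on the
norm gives a 3-NAF of `y`, to which `0` or `u, 0, 0` is attached at the least significant end.
-/

open Matrix

noncomputable section

/-- `W`-NAF property: among any `W` consecutive digits at most one is nonzero. -/
def gNAF (W : ℕ) (l : List GaussianInt) : Prop :=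
  ∀ j k : ℕ, j < k → k < j + W → l.getD j 0 ≠ 0 → l.getD k 0 = 0

/-- `x` has a 3-NAF representation with digits in `gD`. -/
def HasNAF (x : GaussianInt) : Prop :=
  ∃ l : List GaussianInt, gIsRep x l ∧ gNAF 3 l

theorem hasNAF_zero : HasNAF 0 :=
  ⟨[], ⟨by simp, by simp [gval]⟩, by intro j k _ _ h; simp at h⟩

theorem HasNAF.shift {y : GaussianInt} (h : HasNAF y) : HasNAF (gβ * y) := by
  obtain ⟨l, ⟨hd, hv⟩, hn⟩ := h
  refine ⟨0 :: l, ⟨?_, ?_⟩, ?_⟩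
  · intro d hd'
    rcases List.mem_cons.1 hd' with rfl | h
    · simp [gD]
    · exact hd d h
  · rw [← hv]; simp [gval]
  · intro j k hjk hk hj
    match j, k with
    | 0, _ => simp at hj
    | j + 1, 0 => omega
    | j + 1, k + 1 =>
      simp only [List.getD_cons_succ] at hj ⊢
      exact hn j k (by omega) (by omega) hj

theorem HasNAF.digit {u y : GaussianInt} (hu : u ∈ gD) (h : HasNAF y) :
    HasNAF (u + gβ * (gβ * (gβ * y))) := by
  obtain ⟨l, ⟨hd, hv⟩, hn⟩ := h
  refine ⟨u :: 0 :: 0 :: l, ⟨?_, ?_⟩, ?_⟩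
  · intro d hd'
    simp only [List.mem_cons] at hd'
    rcases hd' with rfl | rfl | rfl | h
    · exact hu
    · simp [gD]
    · simp [gD]
    · exact hd d h
  · rw [← hv]; simp [gval]
  · intro j k hjk hk hj
    match j, k with
    | 0, 0 => omega
    | 0, 1 => simp
    | 0, 2 => simp
    | 0, k + 3 => omega
    | 1, _ => simp at hj
    | 2, _ => simp at hj
    | j + 3, 0 => omega
    | j + 3, 1 => omega
    | j + 3, 2 => omega
    | j + 3, k + 3 =>
      simp only [List.getD_cons_succ] at hj ⊢
      exact hn j k (by omega) (by omega) hj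

/-- Multiplication by `β ^ 3 = 2 + 2 * i`, in coordinates. -/
theorem add_cube_mul (p q c d : ℤ) :
    (⟨p, q⟩ : GaussianInt) + gβ * (gβ * (gβ * ⟨c, d⟩)) =
      ⟨p + 2 * c - 2 * d, q + 2 * c + 2 * d⟩ := by
  apply Zsqrtd.ext
  · simp [gβ]; ring
  · simp [gβ]; ring

/-- If `p + q * i` is a unit, then `y = c + d * i` has smaller norm than `x = p + q * i + β ^ 3 * y`. -/
theorem norm_quotient_lt {a b p q c d : ℤ} (hpq : p ^ 2 + q ^ 2 = 1)
    (ha : a = p + 2 * c - 2 * d) (hb : b = q + 2 * c + 2 * d) :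
    c ^ 2 + d ^ 2 < a ^ 2 + b ^ 2 := by
  by_contra! hle
  -- `N (x - u) = 8 * N y` and `N (x - u) ≤ 2 * N x + 2 * N u`, so `6 * N y ≤ 2` and `y = 0`.
  have hx : 8 * (c ^ 2 + d ^ 2) = (a - p) ^ 2 + (b - q) ^ 2 := by rw [ha, hb]; ring
  have hy : c ^ 2 + d ^ 2 = 0 := by
    nlinarith [sq_nonneg (a + p), sq_nonneg (b + q), sq_nonneg c, sq_nonneg d]
  have hc : c = 0 := by nlinarith [sq_nonneg c, sq_nonneg d]
  have hd : d = 0 := by nlinarith [sq_nonneg c, sq_nonneg d]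
  subst hc hd
  simp only [mul_zero, add_zero, sub_zero] at ha hb
  subst ha hb
  omega

theorem hasNAF_of_norm_lt (n : ℕ) :
    ∀ a b : ℤ, a ^ 2 + b ^ 2 < n → HasNAF ⟨a, b⟩ := by
  induction n with
  | zero => intro a b h; push_cast at h; nlinarith [sq_nonneg a, sq_nonneg b]
  | succ n ih =>
    intro a b h
    push_cast at h
    have step : ∀ p q c d : ℤ, (⟨p, q⟩ : GaussianInt) ∈ gD → p ^ 2 + q ^ 2 = 1 →
        a = p + 2 * c - 2 * d → b = q + 2 * c + 2 * d → HasNAF ⟨a, b⟩ := by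
      intro p q c d hu hpq ha hb
      have hlt := norm_quotient_lt hpq ha hb
      have := HasNAF.digit hu (ih c d (by omega))
      rwa [add_cube_mul, ← ha, ← hb] at this
    rcases Int.even_or_odd' (a + b) with ⟨m, hm | hm⟩
    · by_cases h0 : a = 0 ∧ b = 0
      · obtain ⟨rfl, rfl⟩ := h0
        exact hasNAF_zero
      · -- `x / β = (b - a) / 2 - ((a + b) / 2) * i`
        have hb : b = 2 * m - a := by omega
        have hpos : 0 < a ^ 2 + b ^ 2 := by
          by_contra! hle
          exact h0 ⟨by nlinarith [sq_nonneg a, sq_nonneg b],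
            by nlinarith [sq_nonneg a, sq_nonneg b]⟩
        have hhalf : 2 * ((m - a) ^ 2 + (-m) ^ 2) = a ^ 2 + b ^ 2 := by rw [hb]; ring
        have := (ih (m - a) (-m) (by omega)).shift
        have e : gβ * (⟨m - a, -m⟩ : GaussianInt) = ⟨a, b⟩ := by
          rw [hb]
          apply Zsqrtd.ext
          · simp [gβ]
          · simp [gβ]; ring
        rwa [e] at this
    · -- The digit is determined by `a + b` and `b - a` modulo `4`, both of which are odd.
      have h1 : (a + b) % 4 = 1 ∨ (a + b) % 4 = 3 := by omega
      have h2 : (b - a) % 4 = 1 ∨ (b - a) % 4 = 3 := by omega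
      rcases h1 with h1 | h1 <;> rcases h2 with h2 | h2
      · exact step 0 1 ((a + b - 1) / 4) ((b - a - 1) / 4) (by simp [gD, gI]) (by norm_num)
          (by omega) (by omega)
      · exact step 1 0 ((a + b - 1) / 4) ((b - a + 1) / 4) (Or.inr (Or.inl rfl)) (by norm_num)
          (by omega) (by omega)
      · exact step (-1) 0 ((a + b + 1) / 4) ((b - a - 1) / 4) (Or.inr (Or.inr (Or.inl rfl)))
          (by norm_num) (by omega) (by omega)
      · exact step 0 (-1) ((a + b + 1) / 4) ((b - a + 1) / 4)
          (Or.inr (Or.inr (Or.inr (Or.inr rfl)))) (by norm_num) (by omega) (by omega)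

/-- Every Gaussian integer has a 3-NAF `(β, D)`-representation. -/
theorem stmt1 (x : GaussianInt) :
    ∃ l : List GaussianInt, gIsRep x l ∧ gNAF 3 l := by
  obtain ⟨a, b⟩ := x
  exact hasNAF_of_norm_lt ((a ^ 2 + b ^ 2).toNat + 1) a b (by push_cast; omega)
end
end

section
/- Let β = i − 1 and D = {0, 1, −1, i, −i}. For x ∈ ℤ[i] and k ∈ ℕ let r(x, k) denote the number of normalized (β, D)-representations of x with exactly k nonzero digits. Then r(0, 0) = 1 and r(0, k+1) = 0 for all k; and for x ≠ 0, r(x, 0) = 0, and moreover r(x, k+1) = r(x/β, k+1) if β divides x, while r(x, k+1) = Σ_{d ∈ {1, −1, i, −i}} r((x − d)/β, k) if β does not divide x (note that β divides x − d for every d ∈ {1, −1, i, −i} when β ∤ x). -/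
/-!
Write a representation as `d₀ :: l` with `d₀` the least significant digit, so that its value is
`d₀ + β y` with `y` the value of `l`. Since `β` has norm 2, `β ∣ a + bi` exactly when `a + b` is
even; hence `β` divides no nonzero digit, and `d₀ = 0` if and only if `β ∣ x`. Removing `d₀` is
therefore a bijection from the representations of `x ≠ 0` onto those of `x / β` (when `β ∣ x`), or
onto the disjoint union over the four units `d` of those of `(x - d) / β` (when `β ∤ x`); these are
`gReps_of_dvd` and `gReps_of_not_dvd`. The same parity argument shows that the only normalized
representation of `0` is the empty one.

As `Nat.card` of an infinite type is `0`, additivity over the disjoint union needs the sets of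
representations to be finite (`gReps_finite`): this follows by induction on the weight and, for
fixed weight, on the norm of `x`, since dividing by `β` halves the norm.
-/

open Matrix

noncomputable section

/-- `gr x k` : number of normalized representations of `x` with exactly `k`
nonzero digits. -/
def gr (x : GaussianInt) (k : ℕ) : ℕ :=
  Nat.card {l : List GaussianInt // gIsRep x l ∧ gNormalized l ∧ gweight l = k}

/-- The set of normalized representations of `x` of Hamming weight `k`. -/
def gReps (x : GaussianInt) (k : ℕ) : Set (List GaussianInt) :=
  {l | gIsRep x l ∧ gNormalized l ∧ gweight l = k}

lemma gr_eq_ncard (x : GaussianInt) (k : ℕ) : gr x k = (gReps x k).ncard := rfl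

lemma gβ_ne_zero : gβ ≠ 0 := by
  intro h
  have := congrArg Zsqrtd.re h
  simp [gβ] at this

lemma gβ_dvd_iff (x : GaussianInt) : gβ ∣ x ↔ (x.re + x.im) % 2 = 0 := by
  constructor
  · rintro ⟨y, rfl⟩
    simp [gβ]
    omega
  · intro h
    refine ⟨⟨(x.im - x.re) / 2, -((x.re + x.im) / 2)⟩, ?_⟩
    ext <;> simp [gβ] <;> omega

lemma gβ_dvd_digit {d : GaussianInt} (hd : d ∈ gD) : gβ ∣ d ↔ d = 0 := by
  rcases hd with rfl | rfl | rfl | rfl | rfl <;>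
    simp [gβ_dvd_iff, gI, Zsqrtd.ext_iff]

lemma gβ_dvd_sub_digit {x d : GaussianInt} (hx : ¬ gβ ∣ x) (hd : d ∈ gD) (h0 : d ≠ 0) :
    gβ ∣ x - d := by
  have h := (gβ_dvd_digit hd).not.mpr h0
  rw [gβ_dvd_iff] at *
  simp only [Zsqrtd.re_sub, Zsqrtd.im_sub]
  omega

lemma gβ_mul_div {x : GaussianInt} (h : gβ ∣ x) : gβ * (x / gβ) = x :=
  EuclideanDomain.mul_div_cancel' gβ_ne_zero h

lemma gβ_mul_inj {x y : GaussianInt} : gβ * x = gβ * y ↔ x = y :=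
  mul_right_inj' gβ_ne_zero

lemma gval_cons (d : GaussianInt) (l : List GaussianInt) : gval (d :: l) = d + gβ * gval l := rfl

lemma gweight_cons_zero (l : List GaussianInt) : gweight (0 :: l) = gweight l := by
  simp [gweight]

lemma gweight_cons_ne {d : GaussianInt} (h : d ≠ 0) (l : List GaussianInt) :
    gweight (d :: l) = gweight l + 1 := by
  simp [gweight, h]

lemma gNormalized_cons_ne {d : GaussianInt} (h : d ≠ 0) (l : List GaussianInt) :
    gNormalized (d :: l) ↔ gNormalized l := by
  cases l <;> simp [gNormalized, h]

lemma gNormalized_cons_zero (l : List GaussianInt) :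
    gNormalized (0 :: l) ↔ l ≠ [] ∧ gNormalized l := by
  cases l <;> simp [gNormalized]

lemma zero_mem_gD : (0 : GaussianInt) ∈ gD := by simp [gD]

lemma cons_mem_gReps_of_ne {d y : GaussianInt} (hd : d ∈ gD) (h0 : d ≠ 0) {l : List GaussianInt}
    {k : ℕ} : d :: l ∈ gReps (d + gβ * y) (k + 1) ↔ l ∈ gReps y k := by
  simp [gReps, gIsRep, gval_cons, gweight_cons_ne h0, gNormalized_cons_ne h0, gβ_ne_zero, hd]

/-- The hypothesis `y ≠ 0` ensures that `l` is nonempty, so that the leading digit of `0 :: l` is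
that of `l`. -/
lemma cons_zero_mem_gReps {y : GaussianInt} (hy : y ≠ 0) {l : List GaussianInt}
    {k : ℕ} : 0 :: l ∈ gReps (gβ * y) k ↔ l ∈ gReps y k := by
  have hl : gval l = y → l ≠ [] := by
    rintro h rfl
    exact hy h.symm
  simp only [gReps, gIsRep, Set.mem_ofPred_eq, gval_cons, gweight_cons_zero,
    gNormalized_cons_zero, zero_add, gβ_mul_inj, List.forall_mem_cons, zero_mem_gD, true_and]
  tauto

/-- The least significant digit vanishes exactly when `β` divides the represented number. -/
lemma digit_eq_zero_iff {d x : GaussianInt} {l : List GaussianInt} {k : ℕ}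
    (h : d :: l ∈ gReps x k) : d = 0 ↔ gβ ∣ x := by
  obtain ⟨⟨hD, rfl⟩, -⟩ := h
  rw [gval_cons, ← gβ_dvd_digit (hD d (by simp)), dvd_add_left (dvd_mul_right _ _)]

lemma eq_nil_of_gval_eq_zero (l : List GaussianInt) (hD : ∀ d ∈ l, d ∈ gD)
    (hN : gNormalized l) (hv : gval l = 0) : l = [] := by
  induction l with
  | nil => rfl
  | cons d l ih =>
    have h0 : d = 0 :=
      (digit_eq_zero_iff (k := gweight (d :: l)) ⟨⟨hD, hv⟩, hN, rfl⟩).mpr (dvd_zero _)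
    subst h0
    rw [gNormalized_cons_zero] at hN
    have hv' : gval l = 0 := by
      simpa [gval_cons, gβ_ne_zero] using hv
    exact absurd (ih (fun d hd => hD d (by simp [hd])) hN.2 hv') hN.1

lemma gReps_zero_zero : gReps 0 0 = {[]} := by
  ext l
  constructor
  · rintro ⟨⟨hD, hv⟩, hN, -⟩
    exact eq_nil_of_gval_eq_zero l hD hN hv
  · rintro rfl
    simp [gReps, gIsRep, gval, gNormalized, gweight]

lemma gReps_zero_succ (k : ℕ) : gReps 0 (k + 1) = ∅ := by
  ext l
  simp only [Set.mem_empty_iff_false, iff_false]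
  rintro ⟨⟨hD, hv⟩, hN, hw⟩
  obtain rfl := eq_nil_of_gval_eq_zero l hD hN hv
  simp [gweight] at hw

lemma gval_eq_zero_of_gweight (l : List GaussianInt) (h : gweight l = 0) : gval l = 0 := by
  induction l with
  | nil => rfl
  | cons d l ih =>
    by_cases h0 : d = 0
    · subst h0
      rw [gweight_cons_zero] at h
      simp [gval_cons, ih h]
    · simp [gweight_cons_ne h0] at h

lemma gReps_ne_zero_zero {x : GaussianInt} (hx : x ≠ 0) : gReps x 0 = ∅ := by
  ext l
  simp only [Set.mem_empty_iff_false, iff_false]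
  rintro ⟨⟨-, hv⟩, -, hw⟩
  exact hx (hv ▸ gval_eq_zero_of_gweight l hw)

lemma nil_notMem_gReps_succ {x : GaussianInt} {k : ℕ} : [] ∉ gReps x (k + 1) := by
  simp [gReps, gweight]

lemma gReps_of_dvd {x : GaussianInt} (hx : x ≠ 0) (h : gβ ∣ x) (k : ℕ) :
    gReps x (k + 1) = List.cons 0 '' gReps (x / gβ) (k + 1) := by
  obtain ⟨y, rfl⟩ := h
  have hy : y ≠ 0 := right_ne_zero_of_mul hx
  rw [mul_div_cancel_left₀ y gβ_ne_zero]
  ext l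
  constructor
  · intro hl
    cases l with
    | nil => exact absurd hl nil_notMem_gReps_succ
    | cons d l =>
      obtain rfl := (digit_eq_zero_iff hl).mpr (dvd_mul_right _ _)
      exact ⟨l, (cons_zero_mem_gReps hy).mp hl, rfl⟩
  · rintro ⟨l, hl, rfl⟩
    exact (cons_zero_mem_gReps hy).mpr hl

lemma cons_mem_gReps_iff_of_not_dvd {x d : GaussianInt} (h : ¬ gβ ∣ x) (hd : d ∈ gD)
    (h0 : d ≠ 0) {l : List GaussianInt} {k : ℕ} :
    d :: l ∈ gReps x (k + 1) ↔ l ∈ gReps ((x - d) / gβ) k := by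
  rw [← cons_mem_gReps_of_ne (y := (x - d) / gβ) hd h0, gβ_mul_div (gβ_dvd_sub_digit h hd h0),
    add_sub_cancel]

lemma gReps_of_not_dvd {x : GaussianInt} (h : ¬ gβ ∣ x) (k : ℕ) :
    gReps x (k + 1) = List.cons 1 '' gReps ((x - 1) / gβ) k ∪
      List.cons (-1) '' gReps ((x + 1) / gβ) k ∪
      List.cons gI '' gReps ((x - gI) / gβ) k ∪
      List.cons (-gI) '' gReps ((x + gI) / gβ) k := by
  have hI : gI ≠ 0 := by simp [gI, Zsqrtd.ext_iff]
  have h1 := fun l => cons_mem_gReps_iff_of_not_dvd (d := 1) (l := l) (k := k) h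
    (by simp [gD]) one_ne_zero
  have h2 := fun l => cons_mem_gReps_iff_of_not_dvd (d := -1) (l := l) (k := k) h
    (by simp [gD]) (neg_ne_zero.mpr one_ne_zero)
  have h3 := fun l => cons_mem_gReps_iff_of_not_dvd (d := gI) (l := l) (k := k) h
    (by simp [gD]) hI
  have h4 := fun l => cons_mem_gReps_iff_of_not_dvd (d := -gI) (l := l) (k := k) h
    (by simp [gD]) (neg_ne_zero.mpr hI)
  rw [sub_neg_eq_add] at h2 h4
  ext l
  simp only [Set.mem_union, Set.mem_image]
  constructor
  · intro hl
    cases l with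
    | nil => exact absurd hl nil_notMem_gReps_succ
    | cons d l =>
      have h0 := (digit_eq_zero_iff hl).not.mpr h
      rcases hl.1.1 d (by simp) with rfl | rfl | rfl | rfl | rfl
      · exact absurd rfl h0
      · exact .inl (.inl (.inl ⟨l, (h1 l).mp hl, rfl⟩))
      · exact .inl (.inl (.inr ⟨l, (h2 l).mp hl, rfl⟩))
      · exact .inl (.inr ⟨l, (h3 l).mp hl, rfl⟩)
      · exact .inr ⟨l, (h4 l).mp hl, rfl⟩
  · rintro (((⟨l, hl, rfl⟩ | ⟨l, hl, rfl⟩) | ⟨l, hl, rfl⟩) | ⟨l, hl, rfl⟩)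
    · exact (h1 l).mpr hl
    · exact (h2 l).mpr hl
    · exact (h3 l).mpr hl
    · exact (h4 l).mpr hl

lemma natAbs_norm_gβ_mul (y : GaussianInt) :
    (gβ * y).norm.natAbs = 2 * y.norm.natAbs := by
  rw [Zsqrtd.norm_mul, Int.natAbs_mul]
  rfl

lemma gReps_finite (k : ℕ) : ∀ x, (gReps x k).Finite := by
  induction k with
  | zero =>
    intro x
    by_cases hx : x = 0
    · subst hx
      simp [gReps_zero_zero]
    · simp [gReps_ne_zero_zero hx]
  | succ k ih =>
    intro x
    induction hn : x.norm.natAbs using Nat.strong_induction_on generalizing x with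
    | _ n ihn =>
      by_cases hx : x = 0
      · subst hx
        simp [gReps_zero_succ]
      by_cases h : gβ ∣ x
      · rw [gReps_of_dvd hx h]
        refine (ihn _ ?_ _ rfl).image _
        have h2 := natAbs_norm_gβ_mul (x / gβ)
        rw [gβ_mul_div h] at h2
        have hpos : 0 < x.norm.natAbs :=
          Int.natAbs_pos.mpr ((GaussianInt.norm_pos.mpr hx).ne')
        omega
      · rw [gReps_of_not_dvd h]
        exact ((((ih _).image _).union ((ih _).image _)).union ((ih _).image _)).union
          ((ih _).image _)

lemma disjoint_image_cons {d e : GaussianInt} (h : d ≠ e) (A B : Set (List GaussianInt)) :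
    Disjoint (List.cons d '' A) (List.cons e '' B) := by
  rw [Set.disjoint_left]
  rintro _ ⟨l, -, rfl⟩ ⟨m, -, hm⟩
  exact h (List.cons.inj hm).1.symm

lemma gr_of_not_dvd {x : GaussianInt} (h : ¬ gβ ∣ x) (k : ℕ) :
    gr x (k + 1) = gr ((x - 1) / gβ) k + gr ((x + 1) / gβ) k +
      gr ((x - gI) / gβ) k + gr ((x + gI) / gβ) k := by
  have hf : ∀ d y, (List.cons d '' gReps y k).Finite := fun d y => (gReps_finite k y).image _
  have hd : ∀ {d e : GaussianInt} (y z), d ≠ e →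
      Disjoint (List.cons d '' gReps y k) (List.cons e '' gReps z k) :=
    fun y z hde => disjoint_image_cons hde _ _
  have h12 : (1 : GaussianInt) ≠ -1 := by simp [Zsqrtd.ext_iff]
  have h13 : (1 : GaussianInt) ≠ gI := by simp [Zsqrtd.ext_iff, gI]
  have h14 : (1 : GaussianInt) ≠ -gI := by simp [Zsqrtd.ext_iff, gI]
  have h23 : (-1 : GaussianInt) ≠ gI := by simp [Zsqrtd.ext_iff, gI]
  have h24 : (-1 : GaussianInt) ≠ -gI := by simp [Zsqrtd.ext_iff, gI]
  have h34 : gI ≠ -gI := by simp [Zsqrtd.ext_iff, gI]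
  simp only [gr_eq_ncard]
  rw [gReps_of_not_dvd h, Set.ncard_union_eq _ (((hf _ _).union (hf _ _)).union (hf _ _)) (hf _ _),
    Set.ncard_union_eq _ ((hf _ _).union (hf _ _)) (hf _ _),
    Set.ncard_union_eq _ (hf _ _) (hf _ _)]
  · simp only [Set.ncard_image_of_injective _ List.cons_injective]
  · exact hd _ _ h12
  · exact (hd _ _ h13).union_left (hd _ _ h23)
  · exact ((hd _ _ h14).union_left (hd _ _ h24)).union_left (hd _ _ h34)

/-- The recurrence for the counting function `r(x, k)`. -/
theorem stmt2 :
    gr 0 0 = 1 ∧ (∀ k : ℕ, gr 0 (k + 1) = 0) ∧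
    ∀ x : GaussianInt, x ≠ 0 →
      gr x 0 = 0 ∧
      ∀ k : ℕ,
        (gβ ∣ x → gr x (k + 1) = gr (x / gβ) (k + 1)) ∧
        (¬ gβ ∣ x →
          gr x (k + 1) =
            gr ((x - 1) / gβ) k + gr ((x + 1) / gβ) k +
              gr ((x - gI) / gβ) k + gr ((x + gI) / gβ) k) := by
  refine ⟨?_, fun k => ?_, fun x hx => ⟨?_, fun k => ⟨fun h => ?_, fun h => gr_of_not_dvd h k⟩⟩⟩
  · simp [gr_eq_ncard, gReps_zero_zero]
  · simp [gr_eq_ncard, gReps_zero_succ]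
  · simp [gr_eq_ncard, gReps_ne_zero_zero hx]
  · rw [gr_eq_ncard, gr_eq_ncard, gReps_of_dvd hx h,
      Set.ncard_image_of_injective _ List.cons_injective]
end
end

section
/- Let β = i − 1 and D = {0, 1, −1, i, −i}. Every nonzero Gaussian integer x ∈ ℤ[i] has infinitely many normalized (β, D)-representations. -/
/-!
A unit `u` satisfies `u = u * i + β * (-u)`, and `-u` is again a unit, so the leading digit of a
representation may be rewritten as two digits any number of times. Hence units have normalized
representations of every positive length (`exists_long_rep_unit`). A nonzero `x` that is not a unit
can be written `x = d + β * y` with a digit `d` and a nonzero `y` of strictly smaller norm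
(`exists_digit_step`). By induction on the norm, every nonzero `x` has arbitrarily long normalized
representations (`exists_long_rep`), hence infinitely many.
-/

open Matrix

noncomputable section

/-- Prepending a least significant digit keeps a nonempty representation normalized. -/
lemma gIsRep_cons {x y d : GaussianInt} {l : List GaussianInt} (hd : d ∈ gD)
    (hx : x = d + gβ * y) (hy : y ≠ 0) (h : gIsRep y l ∧ gNormalized l) :
    gIsRep x (d :: l) ∧ gNormalized (d :: l) := by
  obtain ⟨⟨h1, h2⟩, h3⟩ := h
  refine ⟨⟨?_, ?_⟩, ?_⟩
  · intro e he
    rcases List.mem_cons.1 he with rfl | he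
    · exact hd
    · exact h1 e he
  · rw [hx, ← h2]
    rfl
  · cases l with
    | nil => exact absurd h2.symm hy
    | cons e t => simpa [gNormalized, List.getLast?_cons_cons] using h3

/-- Iterating `u = u * i + β * (-u)` gives a nonzero digit representations of any positive length. -/
lemma exists_long_rep_unit (N : ℕ) : ∀ u ∈ gD, u ≠ 0 →
    ∃ l, (gIsRep u l ∧ gNormalized l) ∧ N < l.length := by
  induction N with
  | zero =>
    intro u hu hu0
    exact ⟨[u], ⟨⟨by simpa using hu, by simp [gval]⟩, by simpa [gNormalized] using hu0⟩, by simp⟩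
  | succ N ih =>
    intro u hu hu0
    have hneg : -u ∈ gD := by
      rcases hu with rfl | rfl | rfl | rfl | rfl <;> simp [gD]
    have hmul : u * gI ∈ gD := by
      rcases hu with rfl | rfl | rfl | rfl | rfl <;> simp [gD, gI, Zsqrtd.ext_iff]
    obtain ⟨l, hl, hlen⟩ := ih (-u) hneg (neg_ne_zero.2 hu0)
    refine ⟨u * gI :: l, gIsRep_cons hmul ?_ (neg_ne_zero.2 hu0) hl, by simpa using hlen⟩
    ext <;> simp [gI, gβ]

/-- If `x - d` has even coordinate sum, it is divisible by `β`; the quotient has half its norm. -/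
lemma exists_quotient (x d : GaussianInt) (hxd : x ≠ d)
    (hpar : (x.re - d.re + (x.im - d.im)) % 2 = 0)
    (hlt : (x.re - d.re) ^ 2 + (x.im - d.im) ^ 2 < 2 * (x.re ^ 2 + x.im ^ 2)) :
    ∃ y : GaussianInt, x = d + gβ * y ∧ y ≠ 0 ∧
      y.re ^ 2 + y.im ^ 2 < x.re ^ 2 + x.im ^ 2 := by
  obtain ⟨k, hk⟩ := Int.dvd_of_emod_eq_zero hpar
  have hx : x = d + gβ * ⟨x.im - d.im - k, -k⟩ := by
    ext <;> simp [gβ] <;> linarith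
  refine ⟨_, hx, ?_, ?_⟩
  · intro h
    rw [h] at hx
    exact hxd (by simpa using hx)
  · have e : x.re - d.re = 2 * k - (x.im - d.im) := by linarith
    rw [e] at hlt
    dsimp only
    nlinarith

/-- One step of the digit expansion of a nonzero `x ∉ D`. For odd coordinate sum, the digit is the
unit pointing in the direction of a nonzero coordinate of `x`, which makes the norm decrease. -/
lemma exists_digit_step (x : GaussianInt) (hx : x ≠ 0) (hxD : x ∉ gD) :
    ∃ d ∈ gD, ∃ y : GaussianInt, x = d + gβ * y ∧ y ≠ 0 ∧
      y.re ^ 2 + y.im ^ 2 < x.re ^ 2 + x.im ^ 2 := by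
  have key : ∀ d ∈ gD, (x.re - d.re + (x.im - d.im)) % 2 = 0 →
      (x.re - d.re) ^ 2 + (x.im - d.im) ^ 2 < 2 * (x.re ^ 2 + x.im ^ 2) →
      ∃ d ∈ gD, ∃ y : GaussianInt, x = d + gβ * y ∧ y ≠ 0 ∧
        y.re ^ 2 + y.im ^ 2 < x.re ^ 2 + x.im ^ 2 := fun d hd h1 h2 =>
    ⟨d, hd, exists_quotient x d (fun h => hxD (h ▸ hd)) h1 h2⟩
  rcases Int.emod_two_eq_zero_or_one (x.re + x.im) with h | h
  · refine key 0 (by simp [gD]) (by simpa using h) ?_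
    have : 0 < x.re ^ 2 + x.im ^ 2 := by
      by_contra hle
      apply hx
      ext
      · simp only [Zsqrtd.re_zero]; nlinarith [sq_nonneg x.re, sq_nonneg x.im]
      · simp only [Zsqrtd.im_zero]; nlinarith [sq_nonneg x.re, sq_nonneg x.im]
    simp only [Zsqrtd.re_zero, Zsqrtd.im_zero, sub_zero]
    linarith
  · rcases lt_trichotomy x.re 0 with hr | hr | hr
    · refine key (-1) (by simp [gD]) (by simp; omega) (by simp; nlinarith [sq_nonneg x.im])
    · rcases lt_trichotomy x.im 0 with hi | hi | hi
      · refine key (-gI) (by simp [gD]) (by simp [gI]; omega) (by simp [gI]; nlinarith)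
      · exact absurd (Zsqrtd.ext hr hi) hx
      · refine key gI (by simp [gD]) (by simp [gI]; omega) (by simp [gI]; nlinarith)
    · refine key 1 (by simp [gD]) (by simp; omega) (by simp; nlinarith [sq_nonneg x.im])

lemma exists_long_rep (N n : ℕ) : ∀ x : GaussianInt, x ≠ 0 → x.re ^ 2 + x.im ^ 2 < (n : ℤ) →
    ∃ l, (gIsRep x l ∧ gNormalized l) ∧ N < l.length := by
  induction n with
  | zero =>
    intro x _ h
    have : 0 ≤ x.re ^ 2 + x.im ^ 2 := by positivity
    simp only [Nat.cast_zero] at h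
    omega
  | succ n ih =>
    intro x hx h
    by_cases hxD : x ∈ gD
    · exact exists_long_rep_unit N x hxD hx
    · obtain ⟨d, hd, y, hxy, hy, hlt⟩ := exists_digit_step x hx hxD
      obtain ⟨l, hl, hlen⟩ := ih y hy (by push_cast at h; linarith)
      exact ⟨d :: l, gIsRep_cons hd hxy hy hl, by simp; omega⟩

/-- Every nonzero Gaussian integer has infinitely many normalized
`(β, D)`-representations. -/
theorem stmt5 (x : GaussianInt) (hx : x ≠ 0) :
    {l : List GaussianInt | gIsRep x l ∧ gNormalized l}.Infinite := by
  apply Set.Infinite.of_image List.length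
  refine Set.infinite_of_forall_exists_gt fun N => ?_
  obtain ⟨l, hl, hlen⟩ := exists_long_rep N ((x.re ^ 2 + x.im ^ 2).toNat + 1) x hx (by
    push_cast
    have := Int.self_le_toNat (x.re ^ 2 + x.im ^ 2)
    omega)
  exact ⟨l.length, ⟨l, hl, rfl⟩, hlen⟩
end
end

section
/- For every N ∈ ℕ and every finite sequence d_1, …, d_n of digits from D = {0, 1, −1, i, −i} with exactly N nonzero terms, the product e A_{d_1} A_{d_2} ⋯ A_{d_n} eᵀ is at most r_N; moreover for every N there exists such a sequence with e A_{d_1} ⋯ A_{d_n} eᵀ = r_N. (In other words, Max(N) = r_N, where Max(N) is the maximum of e A_{d_1} ⋯ A_{d_n} eᵀ over all digit sequences with exactly N nonzero terms.) -/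
/-!
Put `w = A_{d_1} ⋯ A_{d_n} eᵀ`, so that the quantity of interest is the first coordinate `x` of `w`.
Prepending a nonzero digit to the sequence always yields a vector with at most four nonzero entries
`(x, p, q, s)`, whose positions are determined, up to the rotation `R`, by that digit. In these
entries a further nonzero digit acts by one of four maps `T_0, …, T_3` (`St.step`), according to the
quotient of the new digit by the old one; in particular `T_1 (x, p, q, s) = (x + p, 2x + q, 2x, x)`.
Inserting zeros is never advantageous: since `s ≤ p` always holds, the maps for a digit preceded
by a zero (`St.stepZero`) are dominated entrywise by some `T_t`.

Upper bound. The pullback of `x` under suitable words is the family of linear forms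
`f_m = r_m x + r_{m-1} p + r_{m-2} q`, `m ≥ 4`, which satisfies `f_m ∘ T_1 = f_{m+1}`. The invariant
`Good` says that for a vector of weight `N` these forms are at most `r_{N+m}`, likewise the forms
`g_m = f_m ∘ T_0` with bound `r_{N+m+1}`, the mirror images of both under `p ↔ q`, and the finitely
many pullbacks of `x` that occur before the family `f_m` is reached. The maps `T_0` and `T_1`
preserve the invariant (`Good.step_zero`, `Good.step_one`), because every pullback is again a form
of the list or is dominated by one by means of `s ≤ p`, `s ≤ q` and `2 r_m ≤ r_{m+1}`; the maps
`T_3` and `T_2` are their mirror images.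

Attainment. Applying `T_1` repeatedly and then `T_3`, `T_0`, `T_1` evaluates `f_m` (`Reach.form`),
and `f_N = r_N` at the initial vector `(1, 0, 0, 0)`.
-/

open Matrix

noncomputable section

/-- The row vector `e = (1,0,0,0,0,0,0,0,0)`. -/
def e9 : Matrix (Fin 1) (Fin 9) ℤ := !![1,0,0,0,0,0,0,0,0]

/-- The permutation matrix `R = diag(1, P1, P1)`. -/
def R9 : Matrix (Fin 9) (Fin 9) ℤ :=
  !![1,0,0,0,0,0,0,0,0;
     0,0,1,0,0,0,0,0,0;
     0,0,0,1,0,0,0,0,0;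
     0,0,0,0,1,0,0,0,0;
     0,1,0,0,0,0,0,0,0;
     0,0,0,0,0,0,1,0,0;
     0,0,0,0,0,0,0,1,0;
     0,0,0,0,0,0,0,0,1;
     0,0,0,0,0,1,0,0,0]

/-- The matrix `A_1`. -/
def A1 : Matrix (Fin 9) (Fin 9) ℤ :=
  !![1,1,0,0,0,0,0,0,0;
     0,0,0,0,0,0,0,0,0;
     2,0,1,1,0,0,1,0,0;
     2,0,0,1,1,0,0,1,0;
     0,0,0,0,0,0,0,0,0;
     0,0,0,0,0,0,0,0,0;
     1,0,0,1,0,0,0,0,0;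
     0,0,0,0,0,0,0,0,0;
     0,0,0,0,0,0,0,0,0]

/-- The matrix `A_0`. -/
def A0 : Matrix (Fin 9) (Fin 9) ℤ :=
  !![1,0,0,0,0,0,0,0,0;
     0,0,0,0,0,0,1,0,0;
     0,0,0,0,0,0,0,1,0;
     0,0,0,0,0,0,0,0,1;
     0,0,0,0,0,1,0,0,0;
     0,0,0,0,0,0,0,0,0;
     0,0,0,0,0,0,0,0,0;
     0,0,0,0,0,0,0,0,0;
     0,0,0,0,0,0,0,0,0]

/-- The matrix `A_i = Rᵀ A_1 R`. -/
def Ai : Matrix (Fin 9) (Fin 9) ℤ := R9ᵀ * A1 * R9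

/-- The matrix `A_{-1} = Rᵀ A_i R`. -/
def Am1 : Matrix (Fin 9) (Fin 9) ℤ := R9ᵀ * Ai * R9

/-- The matrix `A_{-i} = Rᵀ A_{-1} R`. -/
def Ami : Matrix (Fin 9) (Fin 9) ℤ := R9ᵀ * Am1 * R9

/-- The matrix `A_d` associated with a digit `d ∈ D`. -/
def Amat (d : GaussianInt) : Matrix (Fin 9) (Fin 9) ℤ :=
  if d = 0 then A0
  else if d = 1 then A1
  else if d = gI then Ai
  else if d = -1 then Am1
  else Ami

/-- The sequence `r_N`: `r_0 = r_1 = 1`, `r_2 = 3`, `r_3 = 8`, `r_4 = 17`,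
and `r_{N+3} = r_{N+2} + 2 r_{N+1} + 2 r_N` for `N ≥ 2`. -/
def rseq : ℕ → ℕ
  | 0 => 1
  | 1 => 1
  | 2 => 3
  | 3 => 8
  | 4 => 17
  | (n + 5) => rseq (n + 4) + 2 * rseq (n + 3) + 2 * rseq (n + 2)

/-- The entries `(x, p, q, s)` of a column vector `A_{d_1} ⋯ A_{d_n} eᵀ` with `d_1 ≠ 0` that can be
nonzero; the rotation class of `d_1` decides where they are placed, see `St.toVec`. -/
structure St where
  x : ℤ
  p : ℤ
  q : ℤ
  s : ℤ

/-- The column vector with entries `S` that is produced by the nonzero digit `i ^ k`. -/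
def St.toVec (S : St) : Fin 4 → Fin 9 → ℤ :=
  ![![S.x, 0, S.p, S.q, 0, 0, S.s, 0, 0],
    ![S.x, 0, 0, S.p, S.q, 0, 0, S.s, 0],
    ![S.x, S.q, 0, 0, S.p, 0, 0, 0, S.s],
    ![S.x, S.p, S.q, 0, 0, S.s, 0, 0, 0]]

/-- The column vectors that arise from `S.toVec` after the digit `0`. -/
def St.toVecZero (S : St) : Fin 4 → Fin 9 → ℤ :=
  ![![S.x, S.s, 0, 0, 0, 0, 0, 0, 0],
    ![S.x, 0, S.s, 0, 0, 0, 0, 0, 0],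
    ![S.x, 0, 0, S.s, 0, 0, 0, 0, 0],
    ![S.x, 0, 0, 0, S.s, 0, 0, 0, 0]]

/-- The effect on the entries `(x, p, q, s)` of a nonzero digit equal to `i ^ t` times the previous
nonzero digit, with no zero in between. -/
def St.step (S : St) : Fin 4 → St :=
  ![⟨S.x, 2 * S.x + S.p + S.q + S.s, 2 * S.x + S.q, S.x + S.q⟩,
    ⟨S.x + S.p, 2 * S.x + S.q, 2 * S.x, S.x⟩,
    ⟨S.x + S.q, 2 * S.x, 2 * S.x + S.p, S.x⟩,
    ⟨S.x, 2 * S.x + S.p, 2 * S.x + S.p + S.q + S.s, S.x + S.p⟩]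

/-- The analogue of `St.step` for a nonzero digit separated by one zero from the previous nonzero
digit, acting on `S.toVecZero`. -/
def St.stepZero (S : St) : Fin 4 → St :=
  ![⟨S.x + S.s, 2 * S.x, 2 * S.x, S.x⟩,
    ⟨S.x, 2 * S.x, 2 * S.x + S.s, S.x⟩,
    ⟨S.x, 2 * S.x + S.s, 2 * S.x + S.s, S.x + S.s⟩,
    ⟨S.x, 2 * S.x + S.s, 2 * S.x, S.x⟩]

/-- The nonzero digits `i ^ k`. -/
def dig : Fin 4 → GaussianInt := ![1, gI, -1, -gI]

/-! ### The matrices acting on column vectors -/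

lemma A0_mulVec (x a b c d a' b' c' d' : ℤ) :
    A0 *ᵥ ![x, a, b, c, d, a', b', c', d'] = ![x, b', c', d', a', 0, 0, 0, 0] := by
  ext t; fin_cases t <;> simp [A0, Matrix.mulVec, dotProduct, Fin.sum_univ_succ]

lemma A1_mulVec (x a b c d a' b' c' d' : ℤ) :
    A1 *ᵥ ![x, a, b, c, d, a', b', c', d'] =
      ![x + a, 0, 2 * x + b + c + b', 2 * x + c + d + c', 0, 0, x + c, 0, 0] := by
  ext t; fin_cases t <;> simp [A1, Matrix.mulVec, dotProduct, Fin.sum_univ_succ] <;> ring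

lemma R9_mulVec (x a b c d a' b' c' d' : ℤ) :
    R9 *ᵥ ![x, a, b, c, d, a', b', c', d'] = ![x, b, c, d, a, b', c', d', a'] := by
  ext t; fin_cases t <;> simp [R9, Matrix.mulVec, dotProduct, Fin.sum_univ_succ]

lemma R9T_mulVec (x a b c d a' b' c' d' : ℤ) :
    R9ᵀ *ᵥ ![x, a, b, c, d, a', b', c', d'] = ![x, d, a, b, c, d', a', b', c'] := by
  ext t; fin_cases t <;> simp [R9, Matrix.mulVec, dotProduct, Fin.sum_univ_succ]

lemma Amat_dig (j : Fin 4) : Amat (dig j) = ![A1, Ai, Am1, Ami] j := by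
  fin_cases j <;> simp [Amat, dig, gI, Zsqrtd.ext_iff]

lemma Amat_zero : Amat 0 = A0 := by simp [Amat]

lemma dig_ne_zero (j : Fin 4) : dig j ≠ 0 := by
  fin_cases j <;> simp [dig, gI, Zsqrtd.ext_iff]

lemma dig_mem (j : Fin 4) : dig j ∈ gD := by
  fin_cases j <;> simp [dig, gD]

lemma eq_zero_or_dig {d : GaussianInt} (hd : d ∈ gD) : d = 0 ∨ ∃ j, d = dig j := by
  rcases hd with h | h | h | h | h
  · exact Or.inl h
  · exact Or.inr ⟨0, h⟩
  · exact Or.inr ⟨2, h⟩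
  · exact Or.inr ⟨1, h⟩
  · exact Or.inr ⟨3, h⟩

lemma Amat_dig_toVec (S : St) (j k : Fin 4) :
    Amat (dig j) *ᵥ S.toVec k = (S.step (j - k)).toVec j := by
  rw [Amat_dig]
  fin_cases j <;> fin_cases k <;>
    simp [St.toVec, St.step, Ai, Am1, Ami, ← Matrix.mulVec_mulVec, A1_mulVec, R9_mulVec,
      R9T_mulVec]

lemma Amat_dig_toVecZero (S : St) (j k : Fin 4) :
    Amat (dig j) *ᵥ S.toVecZero k = (S.stepZero (j - k)).toVec j := by
  rw [Amat_dig]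
  fin_cases j <;> fin_cases k <;>
    simp [St.toVec, St.toVecZero, St.stepZero, Ai, Am1, Ami, ← Matrix.mulVec_mulVec, A1_mulVec,
      R9_mulVec, R9T_mulVec]

lemma A0_toVec (S : St) (k : Fin 4) : A0 *ᵥ S.toVec k = S.toVecZero k := by
  fin_cases k <;> simp [St.toVec, St.toVecZero, A0_mulVec]

lemma A0_toVecZero (S : St) (k : Fin 4) :
    A0 *ᵥ S.toVecZero k = (⟨S.x, 0, 0, 0⟩ : St).toVec 0 := by
  fin_cases k <;> simp [St.toVec, St.toVecZero, A0_mulVec]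

lemma e9_mul (P : Matrix (Fin 9) (Fin 9) ℤ) :
    (e9 * P * e9ᵀ) 0 0 = (P *ᵥ (⟨1, 0, 0, 0⟩ : St).toVec 0) 0 := by
  simp [e9, St.toVec, Matrix.mul_apply, Matrix.mulVec, Matrix.vecMul, dotProduct,
    Fin.sum_univ_succ]

/-! ### The linear inequalities -/

/-- `r_N` as an integer. -/
def ρ (n : ℕ) : ℤ := rseq n

lemma ρ_rec (k : ℕ) : ρ (k + 5) = ρ (k + 4) + 2 * ρ (k + 3) + 2 * ρ (k + 2) := by
  simp [ρ, rseq]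

lemma ρ_nonneg (k : ℕ) : 0 ≤ ρ k := by simp [ρ]

lemma ρ_double (k : ℕ) : 2 * ρ (k + 2) ≤ ρ (k + 3) := by
  suffices h : 2 * ρ (k + 2) ≤ ρ (k + 3) ∧ 2 * ρ (k + 3) ≤ ρ (k + 4) ∧
      2 * ρ (k + 4) ≤ ρ (k + 5) from h.1
  induction k with
  | zero => simp [ρ, rseq]
  | succ k ih =>
    obtain ⟨h1, h2, h3⟩ := ih
    refine ⟨h2, h3, ?_⟩
    have r5 := ρ_rec k
    have r6 : ρ (k + 6) = ρ (k + 5) + 2 * ρ (k + 4) + 2 * ρ (k + 3) := ρ_rec (k + 1)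
    have a0 := ρ_nonneg (k + 2)
    change 2 * ρ (k + 5) ≤ ρ (k + 6)
    linarith

/-- The invariant satisfied by the entries `(x, p, q, s)` of every column vector of weight `N`. The
bounds come in pairs, exchanged by swapping `p` and `q` (the primed fields). The left-hand side of
`f k` is the pullback of `x` along a word of `k + 4` nonzero digits, and that of `g k` is the form
of `f k` pulled back once more, along a repeated digit. -/
structure Good (N : ℕ) (x p q s : ℤ) : Prop where
  x_nonneg : 0 ≤ x
  s_nonneg : 0 ≤ s
  s_le_p : s ≤ p
  s_le_q : s ≤ q
  b0 : x ≤ ρ N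
  b1 : x + p ≤ ρ (N + 1)
  b1' : x + q ≤ ρ (N + 1)
  b2 : 3 * x + p + q + s ≤ ρ (N + 2)
  b3 : 8 * x + 3 * p + q + s ≤ ρ (N + 3)
  b3' : 8 * x + p + 3 * q + s ≤ ρ (N + 3)
  f : ∀ k, ρ (k + 4) * x + ρ (k + 3) * p + ρ (k + 2) * q ≤ ρ (N + k + 4)
  f' : ∀ k, ρ (k + 4) * x + ρ (k + 2) * p + ρ (k + 3) * q ≤ ρ (N + k + 4)
  g : ∀ k, ρ (k + 5) * x + ρ (k + 3) * p + (ρ (k + 3) + ρ (k + 2)) * q + ρ (k + 3) * s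
    ≤ ρ (N + k + 5)
  g' : ∀ k, ρ (k + 5) * x + (ρ (k + 3) + ρ (k + 2)) * p + ρ (k + 3) * q + ρ (k + 3) * s
    ≤ ρ (N + k + 5)

lemma Good.swap {N : ℕ} {x p q s : ℤ} (h : Good N x p q s) : Good N x q p s where
  x_nonneg := h.x_nonneg
  s_nonneg := h.s_nonneg
  s_le_p := h.s_le_q
  s_le_q := h.s_le_p
  b0 := h.b0
  b1 := h.b1'
  b1' := h.b1
  b2 := by linarith [h.b2]
  b3 := by linarith [h.b3']
  b3' := by linarith [h.b3]
  f k := by linarith [h.f' k]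
  f' k := by linarith [h.f k]
  g k := by linarith [h.g' k]
  g' k := by linarith [h.g k]

lemma Good.mono {N : ℕ} {x p q s x' p' q' s' : ℤ} (h : Good N x p q s)
    (hx : 0 ≤ x') (hs : 0 ≤ s') (hp : s' ≤ p') (hq : s' ≤ q')
    (hxx : x' ≤ x) (hpp : p' ≤ p) (hqq : q' ≤ q) (hss : s' ≤ s) : Good N x' p' q' s' where
  x_nonneg := hx
  s_nonneg := hs
  s_le_p := hp
  s_le_q := hq
  b0 := by linarith [h.b0]
  b1 := by linarith [h.b1]
  b1' := by linarith [h.b1']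
  b2 := by linarith [h.b2]
  b3 := by linarith [h.b3]
  b3' := by linarith [h.b3']
  f k := by
    have := ρ_nonneg (k + 2); have := ρ_nonneg (k + 3); have := ρ_nonneg (k + 4)
    refine le_trans ?_ (h.f k); gcongr
  f' k := by
    have := ρ_nonneg (k + 2); have := ρ_nonneg (k + 3); have := ρ_nonneg (k + 4)
    refine le_trans ?_ (h.f' k); gcongr
  g k := by
    have := ρ_nonneg (k + 2); have := ρ_nonneg (k + 3); have := ρ_nonneg (k + 5)
    refine le_trans ?_ (h.g k); gcongr
  g' k := by
    have := ρ_nonneg (k + 2); have := ρ_nonneg (k + 3); have := ρ_nonneg (k + 5)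
    refine le_trans ?_ (h.g' k); gcongr

lemma good_zero : Good 0 1 0 0 0 := by
  constructor <;> first | (intro k; simp) | simp [ρ, rseq]

/-- The bounds `f`, `f'`, `g` at the shifted indices at which the step lemmas use them. -/
lemma Good.forms_succ {N : ℕ} {x p q s : ℤ} (h : Good N x p q s) (k : ℕ) :
    (ρ (k + 5) * x + ρ (k + 4) * p + ρ (k + 3) * q ≤ ρ (N + 1 + k + 4)) ∧
    (ρ (k + 5) * x + ρ (k + 3) * p + ρ (k + 4) * q ≤ ρ (N + 1 + k + 4)) ∧
    (ρ (k + 5) * x + ρ (k + 3) * p + (ρ (k + 3) + ρ (k + 2)) * q + ρ (k + 3) * s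
      ≤ ρ (N + 1 + k + 4)) ∧
    (ρ (k + 6) * x + ρ (k + 5) * p + ρ (k + 4) * q ≤ ρ (N + 1 + k + 5)) ∧
    (ρ (k + 6) * x + ρ (k + 4) * p + ρ (k + 5) * q ≤ ρ (N + 1 + k + 5)) := by
  have e1 : N + 1 + k + 4 = N + (k + 1) + 4 := by omega
  have e2 : N + 1 + k + 4 = N + k + 5 := by omega
  have e3 : N + 1 + k + 5 = N + (k + 2) + 4 := by omega
  refine ⟨?_, ?_, ?_, ?_, ?_⟩
  · rw [e1]; exact h.f (k + 1)
  · rw [e1]; exact h.f' (k + 1)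
  · rw [e2]; exact h.g k
  · rw [e3]; exact h.f (k + 2)
  · rw [e3]; exact h.f' (k + 2)

lemma Good.step_zero {N : ℕ} {x p q s : ℤ} (h : Good N x p q s) :
    Good (N + 1) x (2 * x + p + q + s) (2 * x + q) (x + q) := by
  have hx := h.x_nonneg
  have hs := h.s_nonneg
  have hp := h.s_le_p
  have hq := h.s_le_q
  have v1 : ρ 1 = 1 := rfl
  have v2 : ρ 2 = 3 := rfl
  have v3 : ρ 3 = 8 := rfl
  have v4 : ρ 4 = 17 := rfl
  have f0 := h.f 0
  have f0' := h.f' 0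
  simp only [zero_add, add_zero, v2, v3, v4] at f0 f0'
  refine ⟨hx, by linarith, by linarith, by linarith, by linarith [h.b1], ?_, ?_, ?_, ?_, ?_,
    fun k => ?_, fun k => ?_, fun k => ?_, fun k => ?_⟩
  · linarith [h.b2]
  · linarith [h.b2]
  · linarith [h.b3']
  · change _ ≤ ρ (N + 4); linarith
  · change _ ≤ ρ (N + 4); linarith
  -- With `a, b, c = r_{k+2}, r_{k+3}, r_{k+4}`, the slack in each remaining bound is a nonnegative
  -- combination of products of `a, b - 2a, c - 2b` with `x, s, p - s, q - s`.
  all_goals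
    obtain ⟨i1, i2, i3, i4, i5⟩ := h.forms_succ k
    have r5 := ρ_rec k
    have r6 : ρ (k + 6) = ρ (k + 5) + 2 * ρ (k + 4) + 2 * ρ (k + 3) := ρ_rec (k + 1)
    have d1 := sub_nonneg.2 (ρ_double k)
    have d2 : 0 ≤ ρ (k + 4) - 2 * ρ (k + 3) := sub_nonneg.2 (ρ_double (k + 1))
    have a0 := ρ_nonneg (k + 2)
    rw [r6, r5] at i4 i5
    rw [r5] at i1 i2 i3
    try rw [r5]
    have ps := sub_nonneg.2 hp
    have qs := sub_nonneg.2 hq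
    linarith [mul_nonneg a0 hx, mul_nonneg a0 hs, mul_nonneg a0 ps, mul_nonneg a0 qs,
      mul_nonneg d1 hx, mul_nonneg d1 hs, mul_nonneg d1 ps, mul_nonneg d1 qs,
      mul_nonneg d2 hx, mul_nonneg d2 hs, mul_nonneg d2 ps, mul_nonneg d2 qs]

lemma Good.step_one {N : ℕ} {x p q s : ℤ} (h : Good N x p q s) :
    Good (N + 1) (x + p) (2 * x + q) (2 * x) x := by
  have hx := h.x_nonneg
  have hs := h.s_nonneg
  have hp := h.s_le_p
  have hq := h.s_le_q
  have v2 : ρ 2 = 3 := rfl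
  have v3 : ρ 3 = 8 := rfl
  have v4 : ρ 4 = 17 := rfl
  have f0 := h.f 0
  have f0' := h.f' 0
  simp only [zero_add, add_zero, v2, v3, v4] at f0 f0'
  refine ⟨by linarith, hx, by linarith, by linarith, h.b1, ?_, ?_, ?_, ?_, ?_,
    fun k => ?_, fun k => ?_, fun k => ?_, fun k => ?_⟩
  · linarith [h.b2]
  · linarith [h.b2]
  · linarith [h.b3]
  · change _ ≤ ρ (N + 4); linarith
  · change _ ≤ ρ (N + 4); linarith
  -- With `a, b, c = r_{k+2}, r_{k+3}, r_{k+4}`, the slack in each remaining bound is a nonnegative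
  -- combination of products of `a, b - 2a, c - 2b` with `x, s, p - s, q - s`.
  all_goals
    obtain ⟨i1, i2, i3, i4, i5⟩ := h.forms_succ k
    have r5 := ρ_rec k
    have r6 : ρ (k + 6) = ρ (k + 5) + 2 * ρ (k + 4) + 2 * ρ (k + 3) := ρ_rec (k + 1)
    have d1 := sub_nonneg.2 (ρ_double k)
    have d2 : 0 ≤ ρ (k + 4) - 2 * ρ (k + 3) := sub_nonneg.2 (ρ_double (k + 1))
    have a0 := ρ_nonneg (k + 2)
    rw [r6, r5] at i4 i5
    rw [r5] at i1 i2 i3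
    try rw [r5]
    have ps := sub_nonneg.2 hp
    have qs := sub_nonneg.2 hq
    linarith [mul_nonneg a0 hx, mul_nonneg a0 hs, mul_nonneg a0 ps, mul_nonneg a0 qs,
      mul_nonneg d1 hx, mul_nonneg d1 hs, mul_nonneg d1 ps, mul_nonneg d1 qs,
      mul_nonneg d2 hx, mul_nonneg d2 hs, mul_nonneg d2 ps, mul_nonneg d2 qs]

/-- `Good` for the entries bundled as a `St`. -/
def St.IsGood (S : St) (N : ℕ) : Prop := Good N S.x S.p S.q S.s

lemma St.IsGood.step {S : St} {N : ℕ} (h : S.IsGood N) (t : Fin 4) :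
    (S.step t).IsGood (N + 1) := by
  fin_cases t
  · exact Good.step_zero h
  · exact Good.step_one h
  · exact (Good.step_one (Good.swap h)).swap
  · have := (Good.step_zero (Good.swap h)).swap
    simpa [St.IsGood, St.step, add_right_comm] using this

/-- A zero between two nonzero digits never helps: because `s ≤ p`, each `St.stepZero` is dominated
by some `St.step`. -/
lemma St.IsGood.stepZero {S : St} {N : ℕ} (h : S.IsGood N) (t : Fin 4) :
    (S.stepZero t).IsGood (N + 1) := by
  have hx := h.x_nonneg
  have hs := h.s_nonneg
  have hp := h.s_le_p
  have hq := h.s_le_q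
  fin_cases t
  · apply (h.step 1).mono <;> simp [St.stepZero, St.step] <;> linarith
  all_goals apply (h.step 3).mono <;> simp [St.stepZero, St.step] <;> linarith

/-- The invariant holds along every digit sequence, by induction on its length. -/
lemma inv (l : List GaussianInt) (hl : ∀ d ∈ l, d ∈ gD) :
    ∃ (S : St) (k : Fin 4), S.IsGood (gweight l) ∧
      ((l.map Amat).prod *ᵥ (⟨1, 0, 0, 0⟩ : St).toVec 0 = S.toVec k ∨
        (l.map Amat).prod *ᵥ (⟨1, 0, 0, 0⟩ : St).toVec 0 = S.toVecZero k) := by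
  induction l with
  | nil => exact ⟨⟨1, 0, 0, 0⟩, 0, good_zero, Or.inl (by simp)⟩
  | cons d l ih =>
    obtain ⟨S, k, hS, h⟩ := ih fun d' hd' => hl d' (by simp [hd'])
    rw [List.map_cons, List.prod_cons, ← Matrix.mulVec_mulVec]
    rcases eq_zero_or_dig (hl d (by simp)) with rfl | ⟨j, rfl⟩
    · have hw : gweight (0 :: l) = gweight l := by simp [gweight]
      rw [hw, Amat_zero]
      rcases h with h | h <;> rw [h]
      · exact ⟨S, k, hS, Or.inr (A0_toVec S k)⟩
      · refine ⟨⟨S.x, 0, 0, 0⟩, 0, ?_, Or.inl (A0_toVecZero S k)⟩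
        have hs := hS.s_nonneg
        exact hS.mono hS.x_nonneg le_rfl le_rfl le_rfl le_rfl (hs.trans hS.s_le_p)
          (hs.trans hS.s_le_q) hs
    · have hw : gweight (dig j :: l) = gweight l + 1 := by simp [gweight, dig_ne_zero]
      rw [hw]
      rcases h with h | h <;> rw [h]
      · exact ⟨_, j, hS.step _, Or.inl (Amat_dig_toVec S j k)⟩
      · exact ⟨_, j, hS.stepZero _, Or.inl (Amat_dig_toVecZero S j k)⟩

/-! ### Digit sequences attaining the bound -/

/-- `S` occurs, up to rotation, as the entries of a column vector of weight `N`. -/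
def Reach (N : ℕ) (S : St) : Prop :=
  ∃ l : List GaussianInt, (∀ d ∈ l, d ∈ gD) ∧ gweight l = N ∧
    ∃ k, (l.map Amat).prod *ᵥ (⟨1, 0, 0, 0⟩ : St).toVec 0 = S.toVec k

lemma reach_zero : Reach 0 ⟨1, 0, 0, 0⟩ := ⟨[], by simp, by simp [gweight], 0, by simp⟩

lemma Reach.step {N : ℕ} {S : St} (h : Reach N S) (t : Fin 4) : Reach (N + 1) (S.step t) := by
  obtain ⟨l, hl, hw, k, h⟩ := h
  refine ⟨dig (k + t) :: l, ?_, ?_, k + t, ?_⟩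
  · simpa using ⟨dig_mem _, hl⟩
  · rw [← hw]; simp [gweight, dig_ne_zero]
  · rw [List.map_cons, List.prod_cons, ← Matrix.mulVec_mulVec, h, Amat_dig_toVec,
      add_sub_cancel_left]

/-- From `S`, the word `1 ^ (m + 1), 3, 0, 1` of relative rotations evaluates the linear form
`r_{m+4} x + r_{m+3} p + r_{m+2} q`. -/
lemma Reach.form (m : ℕ) : ∀ {N : ℕ} {S : St}, Reach N S →
    ∃ S' : St, Reach (N + m + 4) S' ∧
      S'.x = ρ (m + 4) * S.x + ρ (m + 3) * S.p + ρ (m + 2) * S.q := by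
  induction m with
  | zero =>
    intro N S h
    refine ⟨_, (((h.step 1).step 3).step 0).step 1, ?_⟩
    simp [St.step, ρ, rseq]; ring
  | succ m ih =>
    intro N S h
    obtain ⟨S', h', hx⟩ := ih (h.step 1)
    refine ⟨S', ?_, ?_⟩
    · convert h' using 1; omega
    · rw [hx]
      have := ρ_rec m
      change _ = ρ (m + 5) * S.x + ρ (m + 4) * S.p + ρ (m + 3) * S.q
      rw [this]; simp [St.step]; ring

lemma exists_reach (N : ℕ) : ∃ S : St, Reach N S ∧ S.x = ρ N := by
  rcases N with _ | _ | _ | _ | N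
  · exact ⟨_, reach_zero, rfl⟩
  · exact ⟨_, reach_zero.step 0, by simp [St.step, ρ, rseq]⟩
  · exact ⟨_, (reach_zero.step 0).step 1, by simp [St.step, ρ, rseq]⟩
  · exact ⟨_, ((reach_zero.step 0).step 0).step 1, by simp [St.step, ρ, rseq]⟩
  · obtain ⟨S, h, hx⟩ := reach_zero.form N
    exact ⟨S, by simpa using h, by simpa using hx⟩

lemma toVec_apply_zero (S : St) (k : Fin 4) : S.toVec k 0 = S.x := by
  fin_cases k <;> rfl

lemma toVecZero_apply_zero (S : St) (k : Fin 4) : S.toVecZero k 0 = S.x := by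
  fin_cases k <;> rfl

/-- `Max(N) = r_N`: the maximum of `e A_{d_1} ⋯ A_{d_n} eᵀ` over all digit
sequences from `D` with exactly `N` nonzero terms is `r_N`. -/
theorem stmt7 (N : ℕ) :
    (∀ l : List GaussianInt, (∀ d ∈ l, d ∈ gD) → gweight l = N →
      (e9 * (l.map Amat).prod * e9ᵀ) 0 0 ≤ (rseq N : ℤ)) ∧
    (∃ l : List GaussianInt, (∀ d ∈ l, d ∈ gD) ∧ gweight l = N ∧
      (e9 * (l.map Amat).prod * e9ᵀ) 0 0 = (rseq N : ℤ)) := by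
  constructor
  · intro l hl hw
    obtain ⟨S, k, hS, h⟩ := inv l hl
    rw [hw] at hS
    rw [e9_mul]
    rcases h with h | h <;> rw [h]
    · rw [toVec_apply_zero]; exact hS.b0
    · rw [toVecZero_apply_zero]; exact hS.b0
  · obtain ⟨S, ⟨l, hl, hw, k, h⟩, hx⟩ := exists_reach N
    exact ⟨l, hl, hw, by rw [e9_mul, h, toVec_apply_zero, hx]; rfl⟩
end
end
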